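/- Suppose j₀ ∉ E is a non-elliptic index, so that G_{j₀} is infinite cyclic with generator x, and φ is an automorphism of G which preserves the conjugacy classes of the elliptic factors and maps the subgroup of G generated by all the factors G_j with j ≠ j₀ into itself. Then the normal form of φ(ι_{j₀}(x)) contains exactly one letter from G_{j₀}, and this letter equals ι_{j₀}(x) or ι_{j₀}(x)⁻¹ (i.e., φ(ι_{j₀}(x)) contains exactly one occurrence of x). -/

import Mathlib

/-!
Write `K` for the subgroup generated by the factors `G j`, `j ≠ j₀`, so that `G = K * ⟨x⟩`, and put
`y = φ x`. As `φ` is surjective and `φ K ⊆ K`, the group `G` is generated by `K` and `y`. The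
theorem follows from a statement about generation alone: if `x ∈ ⟨K, y⟩`, then `y = a x^{±1} b` with
`a, b ∈ K` (`IsTreeLength.eq_mul_stable_mul`); the normal form of such a product has the single
letter `x^{±1}` from `G j₀` (`filter_of_mul`).

For the generation statement, `G` acts on the Bass–Serre tree of `K * ⟨x⟩`, seen as an HNN extension
of `K` with trivial edge groups. Let `len g` be the distance from the vertex `K` to `g K`, and
`com g h` the length of the common part of the paths from `K` to `g K` and `h K`; then
`len (g⁻¹ h) = len g + len h - 2 com g h`, and `com` satisfies the ultrametric inequality. By this
formula `len` is additive modulo `2`, and `len x = 1`, so `len y = 2m + 1` is odd.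

Consider a reduced word in `K` and `y^{±1}`. Cancellation at a junction is at most `m`, i.e. less
than half of each syllable:
* at `y⁻¹ a y` or `y a y⁻¹` with `1 ≠ a ∈ K` there is none, as edge stabilizers are trivial;
* at `y a y`, cancellation of more than half would mean that `a y` inverts the middle edge of the
  path from `K` to `a y K`, but the action has no inversions (`IsTreeLength.com_inv_self_le`).

Hence every reduced word containing a syllable `y^{±1}` has length at least `2m + 1`
(`IsTreeLength.Chain.bound`). As `x` is such a word and `len x = 1`, it follows that `m = 0`, so
`len y = 1`, which means `y ∈ K x^{±1} K`.
-/

open Monoid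

/-! ### Length functions of Bass–Serre trees with trivial edge groups -/

/-- The properties used of the action of a group `Γ`, an HNN extension of `K` with stable letter `x`
and trivial edge groups, on its Bass–Serre tree: `len g` is the distance from the base vertex `K` to
`g K`, and `com g h` is the length of the common initial segment of the paths from the base vertex
to `g K` and `h K`. -/
structure IsTreeLength {Γ : Type*} [Group Γ] (K : Subgroup Γ) (x : Γ)
    (len : Γ → ℤ) (com : Γ → Γ → ℤ) : Prop where
  nonneg : ∀ g, 0 ≤ len g
  eq_zero_iff : ∀ g, len g = 0 ↔ g ∈ K
  len_stable : len x = 1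
  len_inv : ∀ g, len g⁻¹ = len g
  com_nonneg : ∀ g h, 0 ≤ com g h
  com_comm : ∀ g h, com g h = com h g
  com_trans : ∀ f g h, min (com f g) (com g h) ≤ com f h
  len_inv_mul : ∀ g h, len (g⁻¹ * h) = len g + len h - 2 * com g h
  com_free : ∀ a ∈ K, a ≠ 1 → ∀ g, com g (a * g) = 0
  len_sandwich : ∀ X, X = x ∨ X = x⁻¹ → ∀ b ∈ K, len (X * b * X) = 2
  split : ∀ g, ∀ m n : ℕ, len g = m + 1 + n →
    ∃ u X w, (X = x ∨ X = x⁻¹) ∧ g = u * X * w ∧ len u = m ∧ len w = n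

namespace IsTreeLength

variable {Γ : Type*} [Group Γ] {K : Subgroup Γ} {x : Γ}
  {len : Γ → ℤ} {com : Γ → Γ → ℤ}

lemma com_self (H : IsTreeLength K x len com) (g : Γ) : com g g = len g := by
  have h2 := H.len_inv_mul g g
  rw [inv_mul_cancel, (H.eq_zero_iff 1).2 (one_mem _)] at h2
  linarith

lemma com_le_left (H : IsTreeLength K x len com) (g h : Γ) : com g h ≤ len g := by
  have h1 := H.com_trans g h g
  rwa [H.com_comm h g, min_self, H.com_self] at h1

lemma com_le_right (H : IsTreeLength K x len com) (g h : Γ) : com g h ≤ len h := by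
  rw [H.com_comm]; exact H.com_le_left h g

lemma len_mul (H : IsTreeLength K x len com) (g h : Γ) :
    len (g * h) = len g + len h - 2 * com g⁻¹ h := by
  have := H.len_inv_mul g⁻¹ h
  rwa [inv_inv, H.len_inv] at this

lemma len_mul_le (H : IsTreeLength K x len com) (g h : Γ) :
    len (g * h) ≤ len g + len h := by
  have := H.len_mul g h
  have := H.com_nonneg g⁻¹ h
  linarith

lemma len_mul_mem (H : IsTreeLength K x len com) (g : Γ) {a : Γ} (ha : a ∈ K) :
    len (g * a) = len g := by
  have h1 := H.len_mul g a
  have h2 := H.com_le_right g⁻¹ a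
  have h3 := H.com_nonneg g⁻¹ a
  have h4 := (H.eq_zero_iff a).2 ha
  linarith

lemma len_mem_mul (H : IsTreeLength K x len com) (g : Γ) {a : Γ} (ha : a ∈ K) :
    len (a * g) = len g := by
  rw [← H.len_inv, mul_inv_rev, H.len_mul_mem _ (inv_mem ha), H.len_inv]

lemma com_mem_mul (H : IsTreeLength K x len com) (g h : Γ) {a : Γ} (ha : a ∈ K) :
    com (a * g) (a * h) = com g h := by
  have h1 := H.len_inv_mul g h
  have h2 := H.len_inv_mul (a * g) (a * h)
  rw [H.len_mem_mul _ ha, H.len_mem_mul _ ha,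
    show (a * g)⁻¹ * (a * h) = g⁻¹ * h by group] at h2
  linarith

/-- An element of odd length `2 * m + 1` does not invert the middle edge of the path from
the base vertex to its image, so less than half of it cancels in its square. -/
lemma com_inv_self_le (H : IsTreeLength K x len com) {y : Γ} {m : ℕ}
    (hy : len y = 2 * m + 1) : com y⁻¹ y ≤ m := by
  by_contra! hlt
  -- `X` is the middle letter; more cancellation forces `w⁻¹ ∈ u K` and `w⁻¹ X⁻¹ ∈ u X K`
  obtain ⟨u, X, w, hX, rfl, hu, hw⟩ := H.split y m m (by rw [hy]; ring)
  have hX1 : len X = 1 := by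
    rcases hX with rfl | rfl
    · exact H.len_stable
    · rw [H.len_inv, H.len_stable]
  have e1 := H.len_inv_mul (u * X * w) (u * X)
  have e2 := H.len_inv_mul (u * X * w)⁻¹ (w⁻¹ * X⁻¹)
  have e3 := H.len_inv_mul (u * X) (w⁻¹ * X⁻¹)
  have e4 := H.len_inv_mul (u * X) u
  have e5 := H.len_inv_mul (w⁻¹ * X⁻¹) w⁻¹
  have e6 := H.len_inv_mul u w⁻¹
  rw [show (u * X * w)⁻¹ * (u * X) = w⁻¹ by group, H.len_inv] at e1
  rw [show (u * X * w)⁻¹⁻¹ * (w⁻¹ * X⁻¹) = u by group, H.len_inv] at e2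
  rw [show (u * X)⁻¹ * u = X⁻¹ by group, H.len_inv] at e4
  rw [show (w⁻¹ * X⁻¹)⁻¹ * w⁻¹ = X by group, H.len_inv] at e5
  have l1 := H.len_mul_le u X
  have l2 := H.len_mul_le (u * X) w
  have l3 := H.len_mul_le w⁻¹ X⁻¹
  have l4 := H.len_mul_le u (X * w)
  rw [← mul_assoc, ← H.len_inv (X * w), mul_inv_rev] at l4
  rw [H.len_inv, H.len_inv] at l3
  have t1 := H.com_trans (u * X) (u * X * w) (u * X * w)⁻¹
  have t2 := H.com_trans (u * X) (u * X * w)⁻¹ (w⁻¹ * X⁻¹)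
  have t3 := H.com_trans u (u * X) (w⁻¹ * X⁻¹)
  have t4 := H.com_trans u (w⁻¹ * X⁻¹) w⁻¹
  rw [H.com_comm (u * X) (u * X * w)] at t1
  rw [H.com_comm (u * X * w) (u * X * w)⁻¹] at t1
  rw [H.com_comm u (u * X)] at t3
  have n1 := H.nonneg ((u * X)⁻¹ * (w⁻¹ * X⁻¹))
  have n2 := H.nonneg (u⁻¹ * w⁻¹)
  have hiw := H.len_inv w
  have z1 : (u * X)⁻¹ * (w⁻¹ * X⁻¹) ∈ K := (H.eq_zero_iff _).1 (by omega)
  have z2 : u⁻¹ * w⁻¹ ∈ K := (H.eq_zero_iff _).1 (by omega)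
  have h1 := H.len_sandwich X hX _ z1
  have h2 := (H.eq_zero_iff _).2 z2
  rw [show X * ((u * X)⁻¹ * (w⁻¹ * X⁻¹)) * X = u⁻¹ * w⁻¹ by group] at h1
  omega

/-- `Chain K y s g` says that `g` is a product `s * a₁ * s₂ * a₂ * ⋯ * sₙ * aₙ` which is reduced as
a word in `K` and `y`: every `sᵢ` is `y` or `y⁻¹` (with `s₁ = s`), every `aᵢ` lies in `K`, and no
factor `sᵢ * aᵢ * sᵢ₊₁` has the form `s * 1 * s⁻¹`. -/
inductive Chain (K : Subgroup Γ) (y : Γ) : Γ → Γ → Prop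
  | single {s a : Γ} : (s = y ∨ s = y⁻¹) → a ∈ K → Chain K y s (s * a)
  | cons {s a t g : Γ} : (s = y ∨ s = y⁻¹) → a ∈ K → Chain K y t g →
      ¬ (a = 1 ∧ s * t = 1) → Chain K y s (s * a * g)

lemma Chain.fst {y s g : Γ} (h : Chain K y s g) : s = y ∨ s = y⁻¹ := by
  cases h <;> assumption

/-- Less than half of each syllable is lost at a junction of a reduced word in `K` and `y`. -/
lemma junction (H : IsTreeLength K x len com) {y : Γ} {m : ℕ}
    (hy : len y = 2 * m + 1) {s t a : Γ} (hs : s = y ∨ s = y⁻¹) (ht : t = y ∨ t = y⁻¹)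
    (ha : a ∈ K) (hne : ¬ (a = 1 ∧ s * t = 1)) : com s⁻¹ (a * t) ≤ m := by
  -- `z a z` has as much cancellation as the square of `a z`
  have key : ∀ z, len z = 2 * m + 1 → com z⁻¹ (a * z) ≤ m := by
    intro z hz
    have h1 := H.com_inv_self_le (y := a * z) (by rw [H.len_mem_mul _ ha, hz])
    have h2 := H.len_inv_mul (a * z)⁻¹ (a * z)
    have h3 := H.len_inv_mul z⁻¹ (a * z)
    rw [show (a * z)⁻¹⁻¹ * (a * z) = a * (z * (a * z)) by group, H.len_mem_mul _ ha,
      H.len_inv, H.len_mem_mul _ ha] at h2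
    rw [inv_inv, H.len_inv, H.len_mem_mul _ ha] at h3
    linarith
  have key2 : ∀ z, a ≠ 1 → com z (a * z) ≤ m := by
    intro z h
    rw [H.com_free a ha h z]; positivity
  have hy' : len y⁻¹ = 2 * m + 1 := by rw [H.len_inv, hy]
  rcases hs with rfl | rfl <;> rcases ht with rfl | rfl
  · exact key _ hy
  · exact key2 _ (by simpa using hne)
  · simpa using key2 _ (by simpa using hne)
  · exact key _ hy'

/-- Every reduced word in `K` and `y` starts with more than half of its first syllable. -/
lemma Chain.bound (H : IsTreeLength K x len com) {y : Γ} {m : ℕ}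
    (hy : len y = 2 * m + 1) {s g : Γ} (h : Chain K y s g) :
    (m : ℤ) + 1 ≤ com s g ∧ 2 * m + 1 ≤ len g := by
  have hlen : ∀ s, (s = y ∨ s = y⁻¹) → len s = 2 * m + 1 := by
    rintro s (rfl | rfl)
    · exact hy
    · rw [H.len_inv, hy]
  induction h with
  | @single s a hs ha =>
    have h1 := H.len_inv_mul s (s * a)
    rw [inv_mul_cancel_left, (H.eq_zero_iff a).2 ha, H.len_mul_mem _ ha, hlen s hs] at h1
    rw [H.len_mul_mem _ ha, hlen s hs]
    omega
  | @cons s a t g hs ha hc hne ih =>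
    have h1 := H.junction hy hs hc.fst ha hne
    have h2 := H.com_mem_mul t g ha
    have h3 := H.com_trans s⁻¹ (a * g) (a * t)
    rw [H.com_comm (a * g)] at h3
    have h4 := H.len_mul s (a * g)
    have h5 := H.len_inv_mul s (s * (a * g))
    rw [inv_mul_cancel_left, H.len_mem_mul _ ha] at h5
    rw [H.len_mem_mul _ ha] at h4
    rw [hlen s hs] at h4 h5
    rw [mul_assoc]
    omega

/-- Elements of `⟨K, y⟩` are written as reduced words by multiplying one generator at a time from the
left. -/
lemma mem_or_chain {y g : Γ} (hg : g ∈ Subgroup.closure ((K : Set Γ) ∪ {y})) :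
    g ∈ K ∨ ∃ a ∈ K, ∃ s h, Chain K y s h ∧ g = a * h := by
  have hK : ∀ b ∈ K, ∀ g, (g ∈ K ∨ ∃ a ∈ K, ∃ s h, Chain K y s h ∧ g = a * h) →
      (b * g ∈ K ∨ ∃ a ∈ K, ∃ s h, Chain K y s h ∧ b * g = a * h) := by
    rintro b hb g (hg | ⟨a, ha, s, h, hc, rfl⟩)
    · exact .inl (mul_mem hb hg)
    · exact .inr ⟨b * a, mul_mem hb ha, s, h, hc, by group⟩
  have hS : ∀ r, (r = y ∨ r = y⁻¹) → ∀ g,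
      (g ∈ K ∨ ∃ a ∈ K, ∃ s h, Chain K y s h ∧ g = a * h) →
      (r * g ∈ K ∨ ∃ a ∈ K, ∃ s h, Chain K y s h ∧ r * g = a * h) := by
    rintro r hr g (hg | ⟨a, ha, s, h, hc, rfl⟩)
    · exact .inr ⟨1, one_mem _, r, _, .single hr hg, by simp⟩
    · by_cases hne : a = 1 ∧ r * s = 1
      · obtain ⟨rfl, hrs⟩ := hne
        cases hc with
        | @single _ b hs hb =>
          left
          rwa [one_mul, ← mul_assoc, hrs, one_mul]
        | @cons _ b t g' hs hb hc' hn =>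
          refine .inr ⟨b, hb, t, g', hc', ?_⟩
          rw [one_mul, mul_assoc, ← mul_assoc, hrs, one_mul]
      · exact .inr ⟨1, one_mem _, r, _, .cons hr ha hc hne, by group⟩
  induction hg using Subgroup.closure_induction_left with
  | one => exact .inl (one_mem _)
  | mul_left z hz g _ ih =>
    rcases hz with hz | rfl
    · exact hK z hz g ih
    · exact hS _ (.inl rfl) g ih
  | inv_mul_cancel z hz g _ ih =>
    rcases hz with hz | rfl
    · exact hK _ (inv_mem hz) g ih
    · exact hS _ (.inr rfl) g ih

/-- If `K` and `y` generate a subgroup containing the stable letter `x`, then `y` is equal to `x`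
or `x⁻¹` up to multiplication by `K` on both sides. -/
theorem eq_mul_stable_mul (H : IsTreeLength K x len com) {y : Γ}
    (hx : x ∈ Subgroup.closure ((K : Set Γ) ∪ {y})) :
    ∃ a ∈ K, ∃ b ∈ K, ∃ X, (X = x ∨ X = x⁻¹) ∧ y = a * X * b := by
  -- otherwise every element of `⟨K, y⟩` has even length
  have hodd : len y % 2 = 1 := by
    by_contra hev
    have hall : ∀ g ∈ Subgroup.closure ((K : Set Γ) ∪ {y}), len g % 2 = 0 := by
      intro g hg
      induction hg using Subgroup.closure_induction with
      | mem z hz =>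
        rcases hz with hz | rfl
        · rw [(H.eq_zero_iff z).2 hz]; rfl
        · omega
      | one => rw [(H.eq_zero_iff 1).2 (one_mem _)]; rfl
      | mul g h _ _ ih ih' => have := H.len_mul g h; omega
      | inv g _ ih => rwa [H.len_inv]
    have h1 := hall x hx
    rw [H.len_stable] at h1
    omega
  obtain ⟨m, hm⟩ : ∃ m : ℕ, len y = 2 * m + 1 :=
    ⟨(len y / 2).toNat, by have := H.nonneg y; omega⟩
  have hm0 : m = 0 := by
    rcases mem_or_chain hx with hK | ⟨a, ha, s, h, hc, he⟩
    · have := (H.eq_zero_iff x).2 hK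
      rw [H.len_stable] at this
      omega
    · have h1 := (hc.bound H hm).2
      have h2 := H.len_mem_mul h ha
      rw [← he, H.len_stable] at h2
      omega
  subst hm0
  obtain ⟨u, X, w, hX, he, hu, hw⟩ := H.split y 0 0 (by rw [hm]; rfl)
  exact ⟨u, (H.eq_zero_iff u).1 hu, w, (H.eq_zero_iff w).1 hw, X, hX, he⟩

end IsTreeLength

/-! ### The Bass–Serre tree as a set of reduced lists -/

namespace StableTree

/-- Length of the longest common prefix of two lists. -/
def lcp {α : Type*} [DecidableEq α] : List α → List α → ℕ
  | p :: L, q :: M => if p = q then lcp L M + 1 else 0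
  | _, _ => 0

section lcp
variable {α : Type*} [DecidableEq α]

@[simp] lemma lcp_nil_left (L : List α) : lcp [] L = 0 := by simp [lcp]

@[simp] lemma lcp_nil_right (L : List α) : lcp L [] = 0 := by cases L <;> simp [lcp]

@[simp] lemma lcp_cons_cons (p q : α) (L M : List α) :
    lcp (p :: L) (q :: M) = if p = q then lcp L M + 1 else 0 := rfl

lemma lcp_comm (L M : List α) : lcp L M = lcp M L := by
  induction L generalizing M with
  | nil => simp
  | cons p L ih => cases M with
    | nil => simp
    | cons q M => simp only [lcp_cons_cons, ih M, eq_comm]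

lemma lcp_self (L : List α) : lcp L L = L.length := by
  induction L with
  | nil => simp
  | cons p L ih => simp [ih]

lemma lcp_le_left (L M : List α) : lcp L M ≤ L.length := by
  induction L generalizing M with
  | nil => simp
  | cons p L ih => cases M with
    | nil => simp
    | cons q M =>
      have := ih M
      simp only [lcp_cons_cons, List.length_cons]
      split_ifs <;> omega

lemma lcp_trans (L M N : List α) : min (lcp L M) (lcp M N) ≤ lcp L N := by
  induction L generalizing M N with
  | nil => simp
  | cons p L ih => cases M with
    | nil => simp
    | cons q M => cases N with
      | nil => simp
      | cons r N =>
        have := ih M N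
        simp only [lcp_cons_cons]
        split_ifs with h1 h2 h3 <;> simp_all

end lcp

variable {A : Type*} [Group A] [DecidableEq A]

/-- The list `[(a₁, e₁), …, (aₙ, eₙ)]` stands for the coset `a₁ x^{e₁} ⋯ aₙ x^{eₙ} A` of `A` in
`A * ⟨x⟩`, where `x^true = x` and `x^false = x⁻¹`. It is reduced if no `x^{e} 1 x^{-e}` occurs;
reduced lists are the vertices of the Bass–Serre tree of `A * ⟨x⟩` as an HNN extension of `A`. -/
def Red (L : List (A × Bool)) : Prop :=
  L.IsChain fun p q => q.1 = 1 → q.2 = p.2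

/-- Left multiplication by `x^e` on cosets written as lists. -/
def push (e : Bool) : List (A × Bool) → List (A × Bool)
  | [] => [(1, e)]
  | p :: L => if p = (1, !e) then L else (1, e) :: p :: L

/-- Left multiplication by `a ∈ A` on cosets written as lists. -/
def act (a : A) : List (A × Bool) → List (A × Bool)
  | [] => []
  | p :: L => (a * p.1, p.2) :: L

omit [DecidableEq A] in
lemma Red.tail {p : A × Bool} {L : List (A × Bool)} (h : Red (p :: L)) : Red L :=
  List.IsChain.tail h

omit [DecidableEq A] in
lemma red_act (a : A) {L : List (A × Bool)} (h : Red L) : Red (act a L) := by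
  cases L with
  | nil => exact h
  | cons p L => cases L with
    | nil => simp [Red, act]
    | cons q L => simpa [Red, act] using h

omit [DecidableEq A] in
lemma act_act (a b : A) (L : List (A × Bool)) : act a (act b L) = act (a * b) L := by
  cases L <;> simp [act, mul_assoc]

omit [DecidableEq A] in
lemma act_one (L : List (A × Bool)) : act 1 L = L := by
  cases L <;> simp [act]

lemma red_push (e : Bool) {L : List (A × Bool)} (h : Red L) : Red (push e L) := by
  cases L with
  | nil => simp [Red, push]
  | cons p L =>
    simp only [push]
    split_ifs with hp
    · exact h.tail
    · refine List.IsChain.cons_cons (fun h1 => ?_) h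
      rcases p with ⟨a, f⟩
      simp only at h1 ⊢
      subst h1
      cases e <;> cases f <;> simp_all

lemma push_not_push (e : Bool) {L : List (A × Bool)} (h : Red L) : push (!e) (push e L) = L := by
  cases L with
  | nil => simp [push]
  | cons p L =>
    simp only [push]
    split_ifs with hp
    · subst hp
      cases L with
      | nil => rfl
      | cons q L =>
        have hq : q.1 = 1 → q.2 = !e := by
          have := h
          simp only [Red, List.isChain_cons_cons] at this
          exact this.1
        have : q ≠ (1, e) := by rintro rfl; simp at hq
        simp [this]
    · simp

variable (A) in
/-- The type of reduced lists. -/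
abbrev Vert := {L : List (A × Bool) // Red L}

omit [DecidableEq A] in
variable (A) in
/-- The base vertex, fixed by `A`. -/
def base : Vert A := ⟨[], by simp [Red]⟩

/-- The stable letter as a permutation of the vertices. -/
def stab : Equiv.Perm (Vert A) where
  toFun L := ⟨push true L.1, red_push _ L.2⟩
  invFun L := ⟨push false L.1, red_push _ L.2⟩
  left_inv L := Subtype.ext (push_not_push true L.2)
  right_inv L := Subtype.ext (push_not_push false L.2)

omit [DecidableEq A] in
/-- The group `A` acting by permutations of the vertices. -/
def actHom : A →* Equiv.Perm (Vert A) where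
  toFun a :=
    { toFun := fun L => ⟨act a L.1, red_act a L.2⟩
      invFun := fun L => ⟨act a⁻¹ L.1, red_act _ L.2⟩
      left_inv := fun L => Subtype.ext (by simp [act_act, act_one])
      right_inv := fun L => Subtype.ext (by simp [act_act, act_one]) }
  map_one' := by ext1 L; exact Subtype.ext (act_one _)
  map_mul' a b := by ext1 L; exact Subtype.ext (act_act _ _ _).symm

/-- The distance in the tree. -/
def dist (L M : List (A × Bool)) : ℤ := L.length + M.length - 2 * lcp L M

lemma dist_act (a : A) (L M : List (A × Bool)) : dist (act a L) (act a M) = dist L M := by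
  rcases L with - | ⟨⟨b, e⟩, L⟩ <;> rcases M with - | ⟨⟨c, f⟩, M⟩ <;> simp [dist, act]

lemma dist_push (e : Bool) {L M : List (A × Bool)} (hL : Red L) (hM : Red M) :
    dist (push e L) (push e M) = dist L M := by
  -- reducedness forbids `x^e` directly after `x^{-e}`, so nothing cancels against a new `x^e`
  have aux : ∀ (L : List (A × Bool)) {M : List (A × Bool)}, Red ((1, !e) :: M) →
      lcp ((1, e) :: L) M = 0 := by
    intro L M h
    rcases M with - | ⟨q, M⟩
    · simp
    · have hq : q.1 = 1 → q.2 = !e := by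
        simp only [Red, List.isChain_cons_cons] at h
        exact h.1
      have : (1, e) ≠ q := by rintro rfl; simp at hq
      simp [this]
  rcases L with - | ⟨p, L⟩ <;> rcases M with - | ⟨q, M⟩
  · simp [dist, push]
  · by_cases hq : q = (1, !e)
    · subst hq
      simp only [push, if_true, dist, aux [] hM]
      simp; ring
    · simp [push, dist, hq]; ring
  · by_cases hp : p = (1, !e)
    · subst hp
      simp only [push, if_true, dist, lcp_comm L, aux [] hL]
      simp
    · simp [push, dist, hp]; ring
  · by_cases hp : p = (1, !e) <;> by_cases hq : q = (1, !e)
    · subst hp; subst hq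
      simp [push, dist]; ring
    · subst hp
      have := aux (q :: M) hL
      rw [lcp_comm] at this
      simp only [push, if_true, dist, if_neg hq, this]
      simp [Ne.symm hq]; ring
    · subst hq
      have := aux (p :: L) hM
      simp only [push, if_true, dist, if_neg hp, this]
      simp [hp]; ring
    · simp only [push, if_neg hp, if_neg hq, dist]
      rw [lcp_cons_cons, if_pos rfl]
      simp only [List.length_cons]
      push_cast; ring

section Action

variable {Γ : Type*} [Group Γ] (i : A →* Γ) (x : Γ) (ρ : Γ →* Equiv.Perm (Vert A))

/-- `x` or `x⁻¹` according to the sign. -/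
def letter (x : Γ) (e : Bool) : Γ := if e then x else x⁻¹

/-- The coset representative `a₁ x^{e₁} ⋯ aₙ x^{eₙ}` read off a list. -/
def ev : List (A × Bool) → Γ
  | [] => 1
  | p :: L => i p.1 * letter x p.2 * ev L

omit [DecidableEq A] in
lemma ev_append (L M : List (A × Bool)) : ev i x (L ++ M) = ev i x L * ev i x M := by
  induction L with
  | nil => simp [ev]
  | cons p L ih => simp [ev, ih, mul_assoc]

lemma rho_letter (hx : ρ x = stab) (e : Bool) (L : Vert A) :
    (ρ (letter x e) L).1 = push e L.1 := by
  cases e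
  · simp only [letter, Bool.false_eq_true, if_false, map_inv, hx]; rfl
  · simp only [letter, if_true, hx]; rfl

/-- A reduced list is the vertex to which its coset representative moves the base vertex. -/
lemma rho_ev (hi : ∀ a, ρ (i a) = actHom a) (hx : ρ x = stab) {L : List (A × Bool)}
    (hL : Red L) : (ρ (ev i x L) (base A)).1 = L := by
  induction L with
  | nil => simp [ev, base]
  | cons p L ih =>
    have hL' := hL.tail
    have hLv : ρ (ev i x L) (base A) = ⟨L, hL'⟩ := Subtype.ext (ih hL')
    have h2 : push p.2 L = (1, p.2) :: L := by
      cases L with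
      | nil => rfl
      | cons q L =>
        have hq : q.1 = 1 → q.2 = p.2 := by
          simp only [Red, List.isChain_cons_cons] at hL
          exact hL.1
        have : q ≠ (1, !p.2) := by rintro rfl; simp at hq
        simp [push, this]
    have h3 : ρ (letter x p.2) ⟨L, hL'⟩ = ⟨(1, p.2) :: L, h2 ▸ red_push _ hL'⟩ :=
      Subtype.ext ((rho_letter x ρ hx _ _).trans h2)
    simp only [ev, map_mul, Equiv.Perm.mul_apply, hLv, h3, hi]
    simp [actHom, act]

lemma dist_rho (hi : ∀ a, ρ (i a) = actHom a) (hx : ρ x = stab)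
    (hgen : Subgroup.closure ((i.range : Set Γ) ∪ {x}) = ⊤) (g : Γ) (L M : Vert A) :
    dist (ρ g L).1 (ρ g M).1 = dist L.1 M.1 := by
  have hg : g ∈ Subgroup.closure ((i.range : Set Γ) ∪ {x}) := hgen ▸ Subgroup.mem_top g
  induction hg using Subgroup.closure_induction generalizing L M with
  | mem z hz =>
    rcases hz with ⟨a, rfl⟩ | rfl
    · rw [hi]; exact dist_act a _ _
    · rw [hx]; exact dist_push true L.2 M.2
  | one => simp
  | mul g h _ _ ih ih' => simp only [map_mul, Equiv.Perm.mul_apply, ih, ih']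
  | inv g _ ih =>
    rw [← ih]
    simp

/-- The vertex `g • base` is the coset of `g`, i.e. `g` agrees with the representative read off that
vertex up to right multiplication by `A`. -/
lemma exists_eq_ev (hi : ∀ a, ρ (i a) = actHom a) (hx : ρ x = stab)
    (hgen : Subgroup.closure ((i.range : Set Γ) ∪ {x}) = ⊤) (g : Γ) :
    ∃ b, g = ev i x (ρ g (base A)).1 * i b := by
  have hg : g ∈ Subgroup.closure ((i.range : Set Γ) ∪ {x}) := hgen ▸ Subgroup.mem_top g
  have hA : ∀ a g, (∃ b, g = ev i x (ρ g (base A)).1 * i b) →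
      ∃ b, i a * g = ev i x (ρ (i a * g) (base A)).1 * i b := by
    rintro a g ⟨b, hb⟩
    have h : (ρ (i a * g) (base A)).1 = act a (ρ g (base A)).1 := by
      rw [map_mul, hi]; rfl
    rw [h]
    generalize (ρ g (base A)).1 = L at hb
    subst hb
    cases L with
    | nil => exact ⟨a * b, by simp [ev, act]⟩
    | cons p L => exact ⟨b, by simp [ev, act, mul_assoc]⟩
  have hX : ∀ e g, (∃ b, g = ev i x (ρ g (base A)).1 * i b) →
      ∃ b, letter x e * g = ev i x (ρ (letter x e * g) (base A)).1 * i b := by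
    rintro e g ⟨b, hb⟩
    have h : (ρ (letter x e * g) (base A)).1 = push e (ρ g (base A)).1 := by
      rw [map_mul, Equiv.Perm.mul_apply, rho_letter x ρ hx]
    rw [h]
    generalize (ρ g (base A)).1 = L at hb
    subst hb
    refine ⟨b, ?_⟩
    cases L with
    | nil => simp [ev, push]
    | cons p L =>
      simp only [push]
      split_ifs with hp
      · subst hp
        cases e <;> simp [ev, letter, mul_assoc]
      · simp [ev, mul_assoc]
  induction hg using Subgroup.closure_induction_left with
  | one => exact ⟨1, by simp [base, ev]⟩
  | mul_left z hz g _ ih =>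
    rcases hz with ⟨a, rfl⟩ | rfl
    · exact hA a g ih
    · exact hX true g ih
  | inv_mul_cancel z hz g _ ih =>
    rcases hz with ⟨a, rfl⟩ | rfl
    · rw [← map_inv]; exact hA a⁻¹ g ih
    · exact hX false g ih

/-- If a group generated by the image of `A` and `x` acts on the tree through `actHom` and `stab`,
the displacement of the base vertex is a tree length. -/
theorem isTreeLength (hi : ∀ a, ρ (i a) = actHom a) (hx : ρ x = stab)
    (hgen : Subgroup.closure ((i.range : Set Γ) ∪ {x}) = ⊤) :
    IsTreeLength i.range x (fun g => ((ρ g (base A)).1.length : ℤ))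
      (fun g h => (lcp (ρ g (base A)).1 (ρ h (base A)).1 : ℤ)) := by
  have hd : ∀ g h, ((ρ (g⁻¹ * h) (base A)).1.length : ℤ) =
      dist (ρ g (base A)).1 (ρ h (base A)).1 := by
    intro g h
    have := dist_rho i x ρ hi hx hgen g⁻¹ (ρ g (base A)) (ρ h (base A))
    rw [← this]
    simp [dist, base]
  have hbase : ∀ a, ρ (i a) (base A) = base A := by
    intro a; rw [hi]; rfl
  have hev := exists_eq_ev i x ρ hi hx hgen
  have hlet : ∀ X, X = x ∨ X = x⁻¹ → ∃ e, X = letter x e := by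
    rintro X (rfl | rfl)
    · exact ⟨true, rfl⟩
    · exact ⟨false, rfl⟩
  refine
    { nonneg := fun g => by positivity
      eq_zero_iff := fun g => ⟨fun h => ?_, ?_⟩
      len_stable := ?_
      len_inv := fun g => ?_
      com_nonneg := fun g h => by positivity
      com_comm := fun g h => by rw [lcp_comm]
      com_trans := fun f g h => by exact_mod_cast lcp_trans _ _ _
      len_inv_mul := fun g h => hd g h
      com_free := ?_
      len_sandwich := ?_
      split := ?_ }
  · obtain ⟨b, hb⟩ := hev g
    have : (ρ g (base A)).1 = [] := by simpa using h
    rw [this] at hb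
    exact ⟨b, by rw [hb]; simp [ev]⟩
  · rintro ⟨a, rfl⟩
    rw [hbase]; rfl
  · have := rho_letter x ρ hx true (base A)
    simp only [letter, if_true] at this
    rw [this]; rfl
  · have := hd g 1
    simpa [dist, base] using this
  · rintro _ ⟨a, rfl⟩ ha g
    have h1 : a ≠ 1 := by rintro rfl; simp at ha
    have : (ρ (i a * g) (base A)).1 = act a (ρ g (base A)).1 := by rw [map_mul, hi]; rfl
    rw [this]
    rcases (ρ g (base A)).1 with - | ⟨p, L⟩
    · simp
    · have : p ≠ (a * p.1, p.2) := by
        intro h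
        exact h1 (by simpa using congrArg Prod.fst h)
      simp [act, this]
  · rintro X hX _ ⟨b, rfl⟩
    obtain ⟨e, rfl⟩ := hlet X hX
    have hr : Red [((1 : A), e), (b, e)] := by simp [Red]
    have h1 := rho_ev i x ρ hi hx hr
    have h2 : ev i x [((1 : A), e), (b, e)] = letter x e * i b * letter x e := by
      simp [ev, mul_assoc]
    rw [h2] at h1
    rw [h1]; rfl
  · intro g m n hg
    obtain ⟨b, hb⟩ := hev g
    have hred := (ρ g (base A)).2
    generalize (ρ g (base A)).1 = L at hg hb hred
    have hlen : L.length = m + 1 + n := by exact_mod_cast hg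
    obtain ⟨Q, R, rfl, hQ⟩ : ∃ Q R, L = Q ++ R ∧ Q.length = m :=
      ⟨L.take m, L.drop m, by simp, by simp; omega⟩
    rcases R with - | ⟨p, R⟩
    · simp at hlen; omega
    have hQr : Red Q := List.IsChain.left_of_append hred
    have hRr : Red R := Red.tail (List.IsChain.right_of_append hred)
    refine ⟨ev i x Q * i p.1, letter x p.2, ev i x R * i b, ?_, ?_, ?_, ?_⟩
    · cases p.2 <;> simp [letter]
    · rw [hb, ev_append]; simp [ev, mul_assoc]
    · rw [map_mul, Equiv.Perm.mul_apply, hbase, rho_ev i x ρ hi hx hQr, hQ]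
    · rw [map_mul, Equiv.Perm.mul_apply, hbase, rho_ev i x ρ hi hx hRr]
      simp at hlen ⊢; omega

end Action

end StableTree

/-! ### Normal forms in the free product -/

section NormalForm

variable {ι : Type*} [DecidableEq ι] {G : ι → Type*} [∀ i, Group (G i)] [∀ i, DecidableEq (G i)]

/-- Acting by a letter from another factor does not change the letters from `G j₀`. -/
lemma filter_of_smul {j₀ j : ι} (hj : j ≠ j₀) (m : G j) (w : CoprodI.Word G) :
    (CoprodI.of m • w).toList.filter (fun p => decide (p.1 = j₀)) =
      w.toList.filter (fun p => decide (p.1 = j₀)) := by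
  have key : ∀ p : CoprodI.Word.Pair G j,
      (CoprodI.Word.rcons p).toList.filter (fun p => decide (p.1 = j₀)) =
        p.tail.toList.filter (fun p => decide (p.1 = j₀)) := by
    intro p
    unfold CoprodI.Word.rcons
    split_ifs with h
    · rfl
    · simp [CoprodI.Word.cons, hj]
  conv_rhs => rw [← (CoprodI.Word.equivPair j).symm_apply_apply w, CoprodI.Word.equivPair_symm, key]
  rw [CoprodI.Word.of_smul_def, key]

/-- If `a` and `b` lie in the free product of the factors other than `G j₀`, the only letter of
`a * x * b` from `G j₀` is `x`. -/
lemma filter_of_mul {j₀ : ι} (x : G j₀) (hx : x ≠ 1) {a b : CoprodI G}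
    (ha : a ∈ ⨆ j ∈ {j : ι | j ≠ j₀}, (CoprodI.of : G j →* CoprodI G).range)
    (hb : b ∈ ⨆ j ∈ {j : ι | j ≠ j₀}, (CoprodI.of : G j →* CoprodI G).range) :
    (CoprodI.Word.equiv (a * CoprodI.of x * b)).toList.filter (fun p => decide (p.1 = j₀)) =
      [⟨j₀, x⟩] := by
  -- the elements of `G` acting on words without changing the letters from `G j₀` form a subgroup
  let S : Subgroup (CoprodI G) :=
    { carrier := {g | ∀ w : CoprodI.Word G, (g • w).toList.filter (fun p => decide (p.1 = j₀)) =
        w.toList.filter (fun p => decide (p.1 = j₀))}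
      one_mem' := fun w => by rw [one_smul]
      mul_mem' := fun {g h} hg hh w => by rw [mul_smul, hg, hh]
      inv_mem' := fun {g} hg w => by rw [← hg (g⁻¹ • w), smul_inv_smul] }
  have hS : ⨆ j ∈ {j : ι | j ≠ j₀}, (CoprodI.of : G j →* CoprodI G).range ≤ S := by
    refine iSup₂_le fun j hj => ?_
    rintro _ ⟨m, rfl⟩ w
    exact filter_of_smul hj m w
  have h1 : CoprodI.Word.equiv (a * CoprodI.of x * b) =
      a • (CoprodI.of x • (b • (CoprodI.Word.empty : CoprodI.Word G))) := by
    rw [← mul_smul, ← mul_smul]; rfl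
  rw [h1, hS ha]
  have h2 := hS hb CoprodI.Word.empty
  generalize b • (CoprodI.Word.empty : CoprodI.Word G) = w at h2
  simp only [CoprodI.Word.empty, List.filter_nil] at h2
  have h3 : w.fstIdx ≠ some j₀ := by
    rw [CoprodI.Word.fstIdx_ne_iff]
    intro l hl h
    have hm : l ∈ w.toList.filter (fun p => decide (p.1 = j₀)) := by
      rw [List.mem_filter]
      exact ⟨List.mem_of_mem_head? hl, by simp [h]⟩
    rw [h2] at hm
    simp at hm
  rw [← CoprodI.Word.cons_eq_smul (h1 := h3) (h2 := hx)]
  simp [CoprodI.Word.cons, h2]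

omit [DecidableEq ι] [∀ i, DecidableEq (G i)] in
lemma closure_factors_union {j₀ : ι} (x : G j₀) (hgen : ∀ y : G j₀, ∃ n : ℤ, y = x ^ n) :
    Subgroup.closure (((⨆ j ∈ {j : ι | j ≠ j₀}, (CoprodI.of : G j →* CoprodI G).range :
      Subgroup (CoprodI G)) : Set (CoprodI G)) ∪ {CoprodI.of x}) = ⊤ := by
  have htop : (⊤ : Subgroup (CoprodI G)) = ⨆ j, (CoprodI.of : G j →* CoprodI G).range := by
    rw [← CoprodI.range_eq_iSup, CoprodI.lift_of']
    exact (MonoidHom.range_eq_top.2 Function.surjective_id).symm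
  rw [eq_top_iff, Subgroup.closure_union, Subgroup.closure_eq, htop]
  refine iSup_le fun j => ?_
  by_cases hj : j = j₀
  · subst hj
    refine le_sup_of_le_right ?_
    rintro _ ⟨g, rfl⟩
    obtain ⟨n, rfl⟩ := hgen g
    rw [map_zpow]
    exact Subgroup.zpow_mem _ (Subgroup.mem_closure_singleton_self _) n
  · exact le_sup_of_le_left (le_iSup₂_of_le j hj le_rfl)

end NormalForm

/-- If `φ` is an automorphism of the free product `G = ⋆ᵢ G i` which preserves the
conjugacy classes of the elliptic factors and maps the subgroup generated by all the
factors `G j`, `j ≠ j₀`, into itself, where `j₀ ∉ E` is a non-elliptic index so that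
`G j₀` is infinite cyclic with generator `x`, then the normal form of `φ x` contains
exactly one letter from `G j₀`, and this letter is `x` or `x⁻¹`. -/
theorem normal_form_of_image_of_free_generator
    {ι : Type*} [Fintype ι] [DecidableEq ι] {G : ι → Type*}
    [∀ i, Group (G i)] [∀ i, DecidableEq (G i)]
    (E : Set ι)
    (hfree : ∀ j ∉ E, Nonempty (G j ≃* Multiplicative ℤ))
    (j₀ : ι) (hj₀ : j₀ ∉ E)
    (x : G j₀)
    (hgen : ∀ y : G j₀, ∃ n : ℤ, y = x ^ n)
    (hinf : ∀ n : ℤ, x ^ n = 1 → n = 0)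
    (φ : CoprodI G ≃* CoprodI G)
    (hconj : ∀ i ∈ E, ∃ c : CoprodI G, ∀ g : G i, ∃ h : G i,
        φ (CoprodI.of g) = c * CoprodI.of h * c⁻¹)
    (hinv : ∀ w ∈ (⨆ j ∈ {j : ι | j ≠ j₀},
        (CoprodI.of : G j →* CoprodI G).range),
        φ w ∈ (⨆ j ∈ {j : ι | j ≠ j₀},
        (CoprodI.of : G j →* CoprodI G).range)) :
    ((CoprodI.Word.equiv (φ (CoprodI.of x))).toList.filter
        (fun p => decide (p.1 = j₀))) = [⟨j₀, x⟩] ∨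
    ((CoprodI.Word.equiv (φ (CoprodI.of x))).toList.filter
        (fun p => decide (p.1 = j₀))) = [⟨j₀, x⁻¹⟩] := by
  classical
  have hx1 : x ≠ 1 := fun h => one_ne_zero (hinf 1 (by simpa using h))
  -- `A` is the free product of the factors other than `G j₀`, acting on the tree of `A * ⟨x⟩`
  let A := CoprodI fun j : {j : ι // j ≠ j₀} => G j
  let i : A →* CoprodI G := CoprodI.lift fun j => (CoprodI.of : G j →* CoprodI G)
  have hrange : i.range = ⨆ j ∈ {j : ι | j ≠ j₀}, (CoprodI.of : G j →* CoprodI G).range := by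
    rw [CoprodI.range_eq_iSup (G := fun j : {j : ι // j ≠ j₀} => G j), iSup_subtype]
    rfl
  rw [← hrange] at hinv
  obtain ⟨ζ, hζ⟩ : ∃ ζ : G j₀ →* Equiv.Perm (StableTree.Vert A), ζ x = StableTree.stab := by
    have hbij : Function.Bijective (zpowersHom (G j₀) x) := by
      refine ⟨(injective_iff_map_eq_one _).2 fun n hn => ?_, fun y => ?_⟩
      · exact hinf n.toAdd (by simpa [zpowersHom_apply] using hn)
      · obtain ⟨n, rfl⟩ := hgen y
        exact ⟨Multiplicative.ofAdd n, by simp [zpowersHom_apply]⟩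
    let e := MulEquiv.ofBijective _ hbij
    refine ⟨(zpowersHom _ StableTree.stab).comp e.symm.toMonoidHom, ?_⟩
    have : e.symm x = Multiplicative.ofAdd 1 := by
      rw [MulEquiv.symm_apply_eq]; simp [e, zpowersHom_apply]
    simp [this, zpowersHom_apply]
  let F : ∀ j, G j →* Equiv.Perm (StableTree.Vert A) := fun j =>
    if h : j = j₀ then
      Eq.rec (motive := fun k _ => G k →* Equiv.Perm (StableTree.Vert A)) ζ h.symm
    else StableTree.actHom.comp
      (CoprodI.of (M := fun j : {j : ι // j ≠ j₀} => G j) (i := ⟨j, h⟩))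
  let ρ := CoprodI.lift F
  have hρx : ρ (CoprodI.of x) = StableTree.stab := by
    simp [ρ, F, hζ]
  have hρi : ∀ a, ρ (i a) = StableTree.actHom a := by
    intro a
    have : ρ.comp i = StableTree.actHom := by
      refine CoprodI.ext_hom _ _ fun j => MonoidHom.ext fun g => ?_
      simp [ρ, i, F, j.2]
    exact DFunLike.congr_fun this a
  have hAx : Subgroup.closure ((i.range : Set (CoprodI G)) ∪ {CoprodI.of x}) = ⊤ := by
    rw [hrange]; exact closure_factors_union x hgen
  have H := StableTree.isTreeLength i (CoprodI.of x) ρ hρi hρx hAx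
  -- `φ` is onto and maps `i.range` into itself, so `i.range` and `φ x` still generate
  have hmem : CoprodI.of x ∈
      Subgroup.closure ((i.range : Set (CoprodI G)) ∪ {φ (CoprodI.of x)}) := by
    have hle : Subgroup.closure ((i.range : Set (CoprodI G)) ∪ {CoprodI.of x}) ≤
        (Subgroup.closure ((i.range : Set (CoprodI G)) ∪ {φ (CoprodI.of x)})).comap
          φ.toMonoidHom := by
      rw [Subgroup.closure_le]
      rintro w (hw | rfl)
      · exact Subgroup.subset_closure (.inl (hinv w hw))
      · exact Subgroup.subset_closure (.inr rfl)
    have := hle (hAx ▸ Subgroup.mem_top (φ.symm (CoprodI.of x)))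
    simpa using this
  obtain ⟨a, ha, b, hb, X, rfl | rfl, he⟩ := H.eq_mul_stable_mul hmem
  · left
    rw [he]
    exact filter_of_mul x hx1 (hrange ▸ ha) (hrange ▸ hb)
  · right
    rw [he, ← map_inv]
    exact filter_of_mul x⁻¹ (inv_ne_one.2 hx1) (hrange ▸ ha) (hrange ▸ hb)
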